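/- Let (X,d_X,μ_X) and (Y,d_Y,μ_Y) be separable metric measure spaces with σ-finite Borel measures, each a Lipschitz differentiability space with systems of Lipschitz charts {(U_i, φ_i)}_{i∈ℕ} and {(V_j, ψ_j)}_{j∈ℕ} respectively. Fix charts (U_i, φ_i) and (V_j, ψ_j) and a Lipschitz function f : X × Y → ℝ. Then: (a) the set of (x₀,y₀) ∈ U_i × V_j at which the X-directional derivative D_X f(x₀,y₀) (with respect to φ_i) exists is a measurable subset of X × Y, and (x₀,y₀) ↦ D_X f(x₀,y₀) is measurable on this set, and likewise for D_Y f with respect to ψ_j; (b) for μ_X × μ_Y-a.e. (x₀,y₀) ∈ U_i × V_j, both D_X f(x₀,y₀) and D_Y f(x₀,y₀) exist. -/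

import Mathlib

open MeasureTheory Metric Filter Set
open scoped ENNReal NNReal

noncomputable section

/-- Dot product of two vectors in `ℝ^d`. -/
def dotp {d : ℕ} (v u : Fin d → ℝ) : ℝ := ∑ k, v k * u k

/-- `v` satisfies the first-order Taylor approximation property of `f` at `x` with respect
to the Lipschitz chart map `φ`. -/
def HasChartDerivAt {X : Type*} [MetricSpace X] {d : ℕ}
    (φ : X → Fin d → ℝ) (f : X → ℝ) (x : X) (v : Fin d → ℝ) : Prop :=
  Filter.Tendsto (fun y => (f y - f x - dotp v (fun k => φ y k - φ x k)) / dist y x)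
    (nhdsWithin x {x}ᶜ) (nhds 0)


theorem abs_dotp_le {d : ℕ} (v u : Fin d → ℝ) : |dotp v u| ≤ d * (‖v‖ * ‖u‖) := by
  unfold dotp
  calc |∑ k, v k * u k| ≤ ∑ k, |v k * u k| := Finset.abs_sum_le_sum_abs _ _
    _ ≤ ∑ _k : Fin d, ‖v‖ * ‖u‖ := by
        apply Finset.sum_le_sum
        intro k _
        rw [abs_mul]
        exact mul_le_mul (norm_le_pi_norm v k) (norm_le_pi_norm u k) (abs_nonneg _) (norm_nonneg _)
    _ = _ := by simp

theorem dotp_sub_left {d : ℕ} (v w u : Fin d → ℝ) : dotp (v - w) u = dotp v u - dotp w u := by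
  simp [dotp, sub_mul]

theorem dotp_smul_left {d : ℕ} (c : ℝ) (w u : Fin d → ℝ) : dotp (c • w) u = c * dotp w u := by
  simp [dotp, Finset.mul_sum, mul_assoc]

theorem hcd_iff {X : Type*} [MetricSpace X] {d : ℕ} (φ : X → Fin d → ℝ) (g : X → ℝ) (x : X)
    (v : Fin d → ℝ) : HasChartDerivAt φ g x v ↔ ∀ n : ℕ, ∃ k : ℕ, ∀ y, dist y x < 1 / ((k : ℝ) + 1) →
      |g y - g x - dotp v (fun k => φ y k - φ x k)| ≤ 1 / ((n : ℝ) + 1) * dist y x := by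
  unfold HasChartDerivAt
  rw [Metric.tendsto_nhdsWithin_nhds]
  constructor
  · intro h n
    obtain ⟨δ, hδ, H⟩ := h (1 / ((n : ℝ) + 1)) (by positivity)
    obtain ⟨k, hk⟩ := exists_nat_one_div_lt hδ
    refine ⟨k, fun y hy => ?_⟩
    by_cases hyx : y = x
    · subst hyx; simp [dotp]
    · have := H (x := y) (by simpa using hyx) (hy.trans hk)
      have hp : 0 < dist y x := dist_pos.2 hyx
      rw [Real.dist_eq, sub_zero, abs_div, abs_of_pos hp, div_lt_iff₀ hp] at this
      exact this.le
  · intro h ε hε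
    obtain ⟨n, hn⟩ := exists_nat_one_div_lt hε
    obtain ⟨k, hk⟩ := h n
    refine ⟨1 / ((k : ℝ) + 1), by positivity, fun y hyx hy => ?_⟩
    have hp : 0 < dist y x := dist_pos.2 (by simpa using hyx)
    rw [Real.dist_eq, sub_zero, abs_div, abs_of_pos hp, div_lt_iff₀ hp]
    exact (hk y hy).trans_lt (mul_lt_mul_of_pos_right hn hp)

theorem hcd_compact_iff {X : Type*} [MetricSpace X] {d : ℕ} (φ : X → Fin d → ℝ) (L : ℝ≥0)
    (hφ : LipschitzWith L φ) (g : X → ℝ) (x : X)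
    (K : Set (Fin d → ℝ)) (hK : IsCompact K) :
    (∃ v ∈ K, HasChartDerivAt φ g x v) ↔ ∀ n : ℕ, ∃ k : ℕ, ∃ v ∈ K, ∀ y, dist y x < 1 / ((k : ℝ) + 1) →
      |g y - g x - dotp v (fun k => φ y k - φ x k)| ≤ 1 / ((n : ℝ) + 1) * dist y x := by
  constructor
  · rintro ⟨v, hv, h⟩ n
    obtain ⟨k, hk⟩ := (hcd_iff φ g x v).1 h n
    exact ⟨k, v, hv, hk⟩
  · intro h
    choose k v hv H using h
    obtain ⟨w, hw, s, hs, hlim⟩ := hK.tendsto_subseq hv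
    refine ⟨w, hw, (hcd_iff φ g x w).2 fun n => ?_⟩
    have h1 : Tendsto (fun m => 1 / ((s m : ℝ) + 1) + (d * L) * ‖v (s m) - w‖) atTop (nhds 0) := by
      have a := tendsto_one_div_add_atTop_nhds_zero_nat (𝕜 := ℝ) |>.comp hs.tendsto_atTop
      have b := (tendsto_iff_norm_sub_tendsto_zero.1 hlim).const_mul ((d : ℝ) * L)
      simpa using a.add b
    obtain ⟨m, hm⟩ := (h1.eventually_lt_const (show (0:ℝ) < 1 / ((n : ℝ) + 1) by positivity)).exists
    refine ⟨k (s m), fun y hy => ?_⟩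
    have e1 := H (s m) y hy
    have e2 := abs_dotp_le (v (s m) - w) (fun k => φ y k - φ x k)
    rw [dotp_sub_left] at e2
    have e3 : ‖(fun k => φ y k - φ x k)‖ ≤ L * dist y x := by
      have := hφ.dist_le_mul y x
      rwa [dist_eq_norm] at this
    have e4 : (d:ℝ) * (‖v (s m) - w‖ * ‖(fun k => φ y k - φ x k)‖)
        ≤ (d:ℝ) * (‖v (s m) - w‖ * (L * dist y x)) := by gcongr
    have e5 := mul_le_mul_of_nonneg_right hm.le (dist_nonneg (x := y) (y := x))
    rw [abs_le] at *
    constructor <;> nlinarith [e1.1, e1.2, e2.1, e2.2]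

theorem meas_compact {X P : Type*} [MetricSpace X] [TopologicalSpace P] [MeasurableSpace P]
    [OpensMeasurableSpace P] {d : ℕ} (φ : X → Fin d → ℝ) (L : ℝ≥0)
    (hφ : LipschitzWith L φ) (π : P → X) (hπ : Continuous π) (F : P → X → ℝ)
    (hF : ∀ y, Continuous fun p => F p y) (hF' : Continuous fun p => F p (π p))
    (K : Set (Fin d → ℝ)) (hK : IsCompact K) :
    MeasurableSet {p | ∃ v ∈ K, HasChartDerivAt φ (F p) (π p) v} := by
  simp_rw [hcd_compact_iff φ L hφ _ _ K hK, setOf_forall, setOf_exists]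
  refine MeasurableSet.iInter fun n => MeasurableSet.iUnion fun k => IsClosed.measurableSet ?_
  haveI : CompactSpace K := isCompact_iff_compactSpace.1 hK
  have hφc := hφ.continuous
  have hcl : IsClosed {q : P × K | ∀ y, dist y (π q.1) < 1 / ((k : ℝ) + 1) →
      |F q.1 y - F q.1 (π q.1) - dotp (q.2 : Fin d → ℝ) (fun k => φ y k - φ (π q.1) k)|
        ≤ 1 / ((n : ℝ) + 1) * dist y (π q.1)} := by
    simp_rw [setOf_forall]
    refine isClosed_iInter fun y => ?_
    have c1 : Continuous fun q : P × K => dist y (π q.1) := by fun_prop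
    have c2 : Continuous fun q : P × K => F q.1 y := (hF y).comp continuous_fst
    have c3 : Continuous fun q : P × K => F q.1 (π q.1) := hF'.comp continuous_fst
    have c4 : Continuous fun q : P × K =>
        dotp (q.2 : Fin d → ℝ) (fun k => φ y k - φ (π q.1) k) := by
      unfold dotp
      refine continuous_finsetSum _ fun k _ => ?_
      have a : Continuous fun q : P × K => (q.2 : Fin d → ℝ) k :=
        (continuous_apply k).comp (continuous_subtype_val.comp continuous_snd)
      have b : Continuous fun q : P × K => φ (π q.1) k :=
        (continuous_apply k).comp (hφc.comp (hπ.comp continuous_fst))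
      exact a.mul (continuous_const.sub b)
    simp_rw [imp_iff_not_or, not_lt, setOf_or]
    exact (isClosed_le continuous_const c1).union
      (isClosed_le ((c2.sub c3).sub c4).abs (continuous_const.mul c1))
  have := isClosedMap_fst_of_compactSpace (X := P) (Y := K) _ hcl
  convert this using 1
  ext p
  simp

theorem meas_exists {X P : Type*} [MetricSpace X] [TopologicalSpace P] [MeasurableSpace P]
    [OpensMeasurableSpace P] {d : ℕ} (φ : X → Fin d → ℝ) (L : ℝ≥0)
    (hφ : LipschitzWith L φ) (π : P → X) (hπ : Continuous π) (F : P → X → ℝ)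
    (hF : ∀ y, Continuous fun p => F p y) (hF' : Continuous fun p => F p (π p))
    (C : Set (Fin d → ℝ)) (hC : IsClosed C) :
    MeasurableSet {p | ∃ v ∈ C, HasChartDerivAt φ (F p) (π p) v} := by
  have : {p | ∃ v ∈ C, HasChartDerivAt φ (F p) (π p) v} =
      ⋃ n : ℕ, {p | ∃ v ∈ Metric.closedBall (0 : Fin d → ℝ) n ∩ C,
        HasChartDerivAt φ (F p) (π p) v} := by
    ext p
    simp only [mem_setOf_eq, mem_iUnion]
    constructor
    · rintro ⟨v, hv, h⟩
      obtain ⟨n, hn⟩ := exists_nat_ge ‖v‖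
      exact ⟨n, v, ⟨by simpa using hn, hv⟩, h⟩
    · rintro ⟨n, v, hv, h⟩
      exact ⟨v, hv.2, h⟩
  rw [this]
  exact MeasurableSet.iUnion fun n => meas_compact φ L hφ π hπ F hF hF' _
    ((isCompact_closedBall _ _).inter_right hC)

theorem existsUnique_iff {X : Type*} [MetricSpace X] {d : ℕ} (φ : X → Fin d → ℝ)
    (g : X → ℝ) (x : X) :
    (∃! v, HasChartDerivAt φ g x v) ↔ (∃ v ∈ (univ : Set (Fin d → ℝ)), HasChartDerivAt φ g x v) ∧
      ¬ ∃ w ∈ Metric.sphere (0 : Fin d → ℝ) 1, HasChartDerivAt φ (fun _ => 0) x w := by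
  constructor
  · rintro ⟨v, hv, huniq⟩
    refine ⟨⟨v, trivial, hv⟩, ?_⟩
    rintro ⟨w, hw, h⟩
    have h2 : HasChartDerivAt φ g x (v - w) := by
      unfold HasChartDerivAt at *
      have := hv.sub h
      rw [sub_zero] at this
      refine this.congr fun y => ?_
      rw [dotp_sub_left]
      ring
    have h3 := huniq _ h2
    have : w = 0 := by simpa using h3
    simp [this] at hw
  · rintro ⟨⟨v, -, hv⟩, hn⟩
    refine ⟨v, hv, fun w hw => ?_⟩
    by_contra hne
    apply hn
    have hpos : ‖w - v‖ ≠ 0 := by simpa [sub_eq_zero] using hne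
    refine ⟨‖w - v‖⁻¹ • (w - v), ?_, ?_⟩
    · simp [norm_smul, hpos]
    · unfold HasChartDerivAt at *
      have := (hw.sub hv).const_mul ‖w - v‖⁻¹
      rw [sub_zero, mul_zero] at this
      refine this.congr fun y => ?_
      rw [dotp_smul_left, dotp_sub_left]
      ring

theorem meas_all {X P : Type*} [MetricSpace X] [TopologicalSpace P] [MeasurableSpace P]
    [OpensMeasurableSpace P] {d : ℕ} (φ : X → Fin d → ℝ) (hφ : ∃ L : ℝ≥0, LipschitzWith L φ)
    (π : P → X) (hπ : Continuous π) (F : P → X → ℝ)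
    (hF : ∀ y, Continuous fun p => F p y) (hF' : Continuous fun p => F p (π p))
    (S : Set P) (hS : MeasurableSet S) :
    MeasurableSet {p | p ∈ S ∧ ∃! v, HasChartDerivAt φ (F p) (π p) v} ∧
    ∃ G : P → Fin d → ℝ, Measurable G ∧ ∀ p, p ∈ S →
      (∃! v, HasChartDerivAt φ (F p) (π p) v) → HasChartDerivAt φ (F p) (π p) (G p) := by
  classical
  obtain ⟨L, hφ⟩ := hφ
  have hE : MeasurableSet {p | ∃! v, HasChartDerivAt φ (F p) (π p) v} := by
    simp_rw [existsUnique_iff]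
    exact (meas_exists φ L hφ π hπ F hF hF' _ isClosed_univ).inter
      (meas_exists φ L hφ π hπ (fun _ _ => 0) (fun _ => continuous_const) continuous_const _
        Metric.isClosed_sphere).compl
  refine ⟨hS.inter hE, fun p => if h : ∃! v, HasChartDerivAt φ (F p) (π p) v then h.choose else 0,
    ?_, ?_⟩
  · refine measurable_of_isClosed fun C hC => ?_
    have hM := meas_exists φ L hφ π hπ F hF hF' C hC
    have h0 : MeasurableSet {_p : P | (0 : Fin d → ℝ) ∈ C} := MeasurableSet.const _
    convert (hE.inter hM).union (hE.compl.inter h0) using 1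
    ext p
    by_cases h : ∃! v, HasChartDerivAt φ (F p) (π p) v
    · have hc := h.choose_spec
      simp only [mem_preimage, h, dif_pos, mem_union, mem_inter_iff, mem_setOf_eq, mem_compl_iff,
        not_true_eq_false, false_and, or_false, true_and]
      constructor
      · intro hh
        exact ⟨_, hh, hc.1⟩
      · rintro ⟨v, hv, hd⟩
        rw [← hc.2 v hd]
        exact hv
    · simp [h]
  · intro p _ h
    simp only [h, dif_pos]
    exact h.choose_spec.1

/-- Lemma 3.8 of the paper: for fixed charts `(U i, φ i)` on `X` and `(V j, ψ j)` on `Y`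
and Lipschitz `f : X × Y → ℝ`, the sets where the directional derivatives `D_X f` and
`D_Y f` exist (uniquely) are measurable, these derivatives are measurable functions on
those sets, and both exist at `μ_X × μ_Y`-a.e. point of `U i × V j`. -/
theorem statement8 {X Y : Type*}
    [MetricSpace X] [MeasurableSpace X] [BorelSpace X] [TopologicalSpace.SeparableSpace X]
    [MetricSpace Y] [MeasurableSpace Y] [BorelSpace Y] [TopologicalSpace.SeparableSpace Y]
    (μX : Measure X) (μY : Measure Y) [SigmaFinite μX] [SigmaFinite μY]
    (m : ℕ → ℕ) (U : ℕ → Set X) (hU : ∀ i, MeasurableSet (U i))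
    (φ : ∀ i, X → Fin (m i) → ℝ) (hφ : ∀ i, ∃ K : ℝ≥0, LipschitzWith K (φ i))
    (hcovX : μX ((⋃ i, U i)ᶜ) = 0)
    (hLDSX : ∀ g : X → ℝ, (∃ K : ℝ≥0, LipschitzWith K g) → ∀ i,
      ∀ᵐ x ∂(μX.restrict (U i)), ∃! v, HasChartDerivAt (φ i) g x v)
    (n : ℕ → ℕ) (V : ℕ → Set Y) (hV : ∀ j, MeasurableSet (V j))
    (ψ : ∀ j, Y → Fin (n j) → ℝ) (hψ : ∀ j, ∃ K : ℝ≥0, LipschitzWith K (ψ j))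
    (hcovY : μY ((⋃ j, V j)ᶜ) = 0)
    (hLDSY : ∀ g : Y → ℝ, (∃ K : ℝ≥0, LipschitzWith K g) → ∀ j,
      ∀ᵐ y ∂(μY.restrict (V j)), ∃! w, HasChartDerivAt (ψ j) g y w)
    (i j : ℕ) (f : X × Y → ℝ) (hf : ∃ K : ℝ≥0, LipschitzWith K f) :
    (MeasurableSet {p : X × Y | p ∈ (U i) ×ˢ (V j) ∧
        ∃! v, HasChartDerivAt (φ i) (fun x => f (x, p.2)) p.1 v} ∧
      ∃ gX : X × Y → Fin (m i) → ℝ, Measurable gX ∧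
        ∀ p : X × Y, p ∈ (U i) ×ˢ (V j) →
          (∃! v, HasChartDerivAt (φ i) (fun x => f (x, p.2)) p.1 v) →
          HasChartDerivAt (φ i) (fun x => f (x, p.2)) p.1 (gX p)) ∧
    (MeasurableSet {p : X × Y | p ∈ (U i) ×ˢ (V j) ∧
        ∃! w, HasChartDerivAt (ψ j) (fun y => f (p.1, y)) p.2 w} ∧
      ∃ gY : X × Y → Fin (n j) → ℝ, Measurable gY ∧
        ∀ p : X × Y, p ∈ (U i) ×ˢ (V j) →
          (∃! w, HasChartDerivAt (ψ j) (fun y => f (p.1, y)) p.2 w) →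
          HasChartDerivAt (ψ j) (fun y => f (p.1, y)) p.2 (gY p)) ∧
    (∀ᵐ p ∂((μX.prod μY).restrict ((U i) ×ˢ (V j))),
      (∃! v, HasChartDerivAt (φ i) (fun x => f (x, p.2)) p.1 v) ∧
      (∃! w, HasChartDerivAt (ψ j) (fun y => f (p.1, y)) p.2 w)) := by
  haveI : SecondCountableTopology X := UniformSpace.secondCountable_of_separable X
  haveI : SecondCountableTopology Y := UniformSpace.secondCountable_of_separable Y
  obtain ⟨K, hf⟩ := hf
  have hfc := hf.continuous
  have hS : MeasurableSet ((U i) ×ˢ (V j)) := (hU i).prod (hV j)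
  have HX := meas_all (φ i) (hφ i) (Prod.fst : X × Y → X) continuous_fst
    (fun p x => f (x, p.2)) (fun y => by fun_prop) (by fun_prop) _ hS
  have HY := meas_all (ψ j) (hψ j) (Prod.snd : X × Y → Y) continuous_snd
    (fun p y => f (p.1, y)) (fun y => by fun_prop) (by fun_prop) _ hS
  refine ⟨HX, HY, ?_⟩
  rw [← Measure.prod_restrict]
  have AX : ∀ᵐ p ∂((μX.restrict (U i)).prod (μY.restrict (V j))), p ∈ {p : X × Y |
      p ∈ (U i) ×ˢ (V j) ∧ ∃! v, HasChartDerivAt (φ i) (fun x => f (x, p.2)) p.1 v} := by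
    rw [ae_iff]
    change ((μX.restrict (U i)).prod (μY.restrict (V j))) ({p : X × Y |
      p ∈ (U i) ×ˢ (V j) ∧ ∃! v, HasChartDerivAt (φ i) (fun x => f (x, p.2)) p.1 v}ᶜ) = 0
    rw [Measure.prod_apply_symm HX.1.compl, lintegral_eq_zero_iff'
      (measurable_measure_prodMk_right HX.1.compl).aemeasurable]
    filter_upwards [ae_restrict_mem (hV j)] with y hy
    have h1 := hLDSX (fun x => f (x, y)) ⟨K * 1,
      hf.comp (LipschitzWith.prodMk_right y)⟩ i
    have h2 : ∀ᵐ x ∂(μX.restrict (U i)), (x, y) ∈ {p : X × Y |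
        p ∈ (U i) ×ˢ (V j) ∧ ∃! v, HasChartDerivAt (φ i) (fun x => f (x, p.2)) p.1 v} := by
      filter_upwards [h1, ae_restrict_mem (hU i)] with x hx hxU
      exact ⟨⟨hxU, hy⟩, hx⟩
    exact h2
  have AY : ∀ᵐ p ∂((μX.restrict (U i)).prod (μY.restrict (V j))), p ∈ {p : X × Y |
      p ∈ (U i) ×ˢ (V j) ∧ ∃! w, HasChartDerivAt (ψ j) (fun y => f (p.1, y)) p.2 w} := by
    rw [ae_iff]
    change ((μX.restrict (U i)).prod (μY.restrict (V j))) ({p : X × Y |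
      p ∈ (U i) ×ˢ (V j) ∧ ∃! w, HasChartDerivAt (ψ j) (fun y => f (p.1, y)) p.2 w}ᶜ) = 0
    rw [Measure.measure_prod_null HY.1.compl]
    filter_upwards [ae_restrict_mem (hU i)] with x hx
    have h1 := hLDSY (fun y => f (x, y)) ⟨K * 1,
      hf.comp (LipschitzWith.prodMk_left x)⟩ j
    have h2 : ∀ᵐ y ∂(μY.restrict (V j)), (x, y) ∈ {p : X × Y |
        p ∈ (U i) ×ˢ (V j) ∧ ∃! w, HasChartDerivAt (ψ j) (fun y => f (p.1, y)) p.2 w} := by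
      filter_upwards [h1, ae_restrict_mem (hV j)] with y hy hyV
      exact ⟨⟨hx, hyV⟩, hy⟩
    exact h2
  filter_upwards [AX, AY] with p h1 h2
  exact ⟨h1.2, h2.2⟩
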